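/- Suppose ν is a probability measure on ℝ^d, absolutely continuous with finite second moment, such that the relative density f(x) := (dν/dγ_d)(x) with respect to the standard Gaussian γ_d = N(0, I_d) is L-log-Lipschitz for some L ≥ 0 (i.e. log f is L-Lipschitz). Then for every t ∈ (0,1) and every x ∈ ℝ^d, ( ((ḃ_t/b_t) a_t² − ȧ_t a_t)(−B_t − L² (b_t/(a_t² + b_t²))²) + (ȧ_t a_t + ḃ_t b_t)/(a_t² + b_t²) ) I_d ⪯ ∇_x v(t,x) ⪯ ( ((ḃ_t/b_t) a_t² − ȧ_t a_t) B_t + (ȧ_t a_t + ḃ_t b_t)/(a_t² + b_t²) ) I_d, where B_t := 5 L b_t (a_t² + b_t²)^{-3/2} ( L + (log(√(a_t² + b_t²)/b_t))^{-1/2} ). -/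

import Mathlib

open MeasureTheory Real Set
open scoped RealInnerProductSpace ENNReal

noncomputable section

/-!
Fix a time. The law of the data `Y` given the noisy observation `x = a Z + b Y` is an exponential
family in `x`, so Tweedie's formulas express the score through its mean and the Jacobian of the
velocity through its covariance. Conjugacy of Gaussians makes this posterior again a log-Lipschitz
perturbation of a Gaussian, of covariance `k⁻¹ I` with `k = 1 + b² / a²`, and it remains to show
that its covariance is close to `k⁻¹ I`. Translating such a measure by `(t / k) • w` multiplies its
density by the Cameron–Martin factor and by a ratio `f (y + u) / f y` within `exp (L ‖u‖) - 1` of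
`1`; testing this against the centred functional `⟪w, y⟫ - m` and differentiating at `t = 0` gives
`|V - ‖w‖² / k| ≤ (L ‖w‖ / k) √V` for the variance `V` of `⟪w, y⟫`.
-/

section LogLipschitz

open scoped NNReal

variable {E : Type*} [NormedAddCommGroup E] {L : ℝ≥0} {f : E → ℝ}

/-- Positive functions with `L`-Lipschitz logarithm: the relative densities for which a measure
counts as a mild perturbation of a Gaussian. -/
structure IsLogLipschitz (L : ℝ≥0) (f : E → ℝ) : Prop where
  pos : ∀ x, 0 < f x
  lipschitzWith_log : LipschitzWith L fun x => log (f x)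

namespace IsLogLipschitz

lemma continuous (hf : IsLogLipschitz L f) : Continuous f := by
  simpa only [Function.comp_def, exp_log (hf.pos _)] using
    continuous_exp.comp hf.lipschitzWith_log.continuous

lemma const_mul (hf : IsLogLipschitz L f) {C : ℝ} (hC : 0 < C) :
    IsLogLipschitz L fun y => C * f y where
  pos y := mul_pos hC (hf.pos y)
  lipschitzWith_log := LipschitzWith.of_dist_le_mul fun x y => by
    simpa [log_mul hC.ne' (hf.pos _).ne'] using hf.lipschitzWith_log.dist_le_mul x y

lemma abs_div_sub_one_le (hf : IsLogLipschitz L f) (y u : E) :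
    |f (y + u) / f y - 1| ≤ exp (L * ‖u‖) - 1 := by
  have hlog : |log (f (y + u) / f y)| ≤ L * ‖u‖ := by
    rw [log_div (hf.pos _).ne' (hf.pos _).ne']
    simpa [dist_eq] using hf.lipschitzWith_log.dist_le_mul (y + u) y
  obtain ⟨hlower, hupper⟩ := abs_le.1 hlog
  have hratio : 0 < f (y + u) / f y := div_pos (hf.pos _) (hf.pos _)
  have hlower := (le_log_iff_exp_le hratio).1 hlower
  have hupper := (log_le_iff_le_exp hratio).1 hupper
  have hcosh := one_le_cosh (L * ‖u‖)
  rw [cosh_eq] at hcosh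
  exact abs_le.2 ⟨by linarith, by linarith⟩

variable [MeasurableSpace E] [BorelSpace E] {μ : Measure E} {ψ : E → ℝ}

lemma integrable_mul_div (hf : IsLogLipschitz L f) (hψ : Integrable ψ μ) (u : E) :
    Integrable (fun y => ψ y * (f (y + u) / f y)) μ := by
  have hcont : Continuous fun y => f (y + u) / f y :=
    (hf.continuous.comp (continuous_add_const u)).div hf.continuous fun y => (hf.pos y).ne'
  refine hψ.mul_bdd (c := exp (L * ‖u‖)) hcont.aestronglyMeasurable (.of_forall fun y => ?_)
  rw [norm_of_nonneg (div_pos (hf.pos _) (hf.pos _)).le]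
  linarith [le_of_abs_le (hf.abs_div_sub_one_le y u)]

lemma abs_integral_mul_div_sub_le (hf : IsLogLipschitz L f) (hψ : Integrable ψ μ) (u : E) :
    |∫ y, ψ y * (f (y + u) / f y) ∂μ - ∫ y, ψ y ∂μ| ≤ (exp (L * ‖u‖) - 1) * ∫ y, |ψ y| ∂μ := by
  rw [← norm_eq_abs, ← integral_sub (hf.integrable_mul_div hψ u) hψ, ← integral_const_mul]
  refine norm_integral_le_of_norm_le (hψ.abs.const_mul _) (.of_forall fun y => ?_)
  rw [← mul_sub_one, norm_mul, mul_comm]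
  exact mul_le_mul_of_nonneg_right (hf.abs_div_sub_one_le y u) (abs_nonneg _)

end IsLogLipschitz

end LogLipschitz

section ExponentialFamily

open ProbabilityTheory

variable {E : Type*} [NormedAddCommGroup E] [InnerProductSpace ℝ E]

lemma inner_le_norm_mul_norm_comm (y x : E) : ⟪y, x⟫ ≤ ‖x‖ * ‖y‖ :=
  (real_inner_comm x y).trans_le (real_inner_le_norm x y)

variable [MeasurableSpace E] {μ : Measure E}

/-- Finiteness of all exponential moments of the norm: the condition under which the
exponential family `x ↦ μ.tilted ⟪·, x⟫` is smooth on the whole space. -/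
def HasExpMoments (μ : Measure E) : Prop :=
  ∀ c : ℝ, Integrable (fun y => exp (c * ‖y‖)) μ

lemma integral_tilted_inner_eq_smul (x : E) :
    ∫ y, y ∂(μ.tilted fun y => ⟪y, x⟫)
      = (∫ y, exp ⟪y, x⟫ ∂μ)⁻¹ • ∫ y, exp ⟪y, x⟫ • y ∂μ := by
  rw [integral_tilted, ← integral_smul]
  simp only [smul_smul, div_eq_inv_mul]

variable [BorelSpace E]

namespace HasExpMoments

lemma integrable_exp_inner (hμ : HasExpMoments μ) (x : E) :
    Integrable (fun y => exp ⟪y, x⟫) μ :=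
  (hμ ‖x‖).mono' (by fun_prop) (.of_forall fun y => by
    simpa using inner_le_norm_mul_norm_comm y x)

lemma tilted_inner (hμ : HasExpMoments μ) (x : E) :
    HasExpMoments (μ.tilted fun y => ⟪y, x⟫) := fun c => by
  refine (integrable_tilted_iff (hμ.integrable_exp_inner x) _).2 ?_
  refine (hμ (‖x‖ + c)).mono' (by fun_prop) (.of_forall fun y => ?_)
  rw [smul_eq_mul, norm_of_nonneg (by positivity), add_mul, exp_add]
  gcongr
  exact inner_le_norm_mul_norm_comm y x

lemma integrable_exp_norm_smul_id [SecondCountableTopology E] (hμ : HasExpMoments μ) (c : ℝ) :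
    Integrable (fun y => exp (c * ‖y‖) • y) μ := by
  refine (hμ (c + 1)).mono' (by fun_prop) (.of_forall fun y => ?_)
  rw [norm_smul, norm_of_nonneg (exp_nonneg _), add_mul, one_mul, exp_add]
  gcongr
  linarith [add_one_le_exp ‖y‖]

lemma integrable_id [SecondCountableTopology E] (hμ : HasExpMoments μ) :
    Integrable (fun y => y) μ := by
  simpa using hμ.integrable_exp_norm_smul_id 0

lemma integrableExpSet_inner (hμ : HasExpMoments μ) (w : E) :
    integrableExpSet (fun y => ⟪w, y⟫) μ = univ := by
  refine eq_univ_of_forall fun t => ?_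
  simpa [integrableExpSet, real_inner_smul_right, real_inner_comm] using
    hμ.integrable_exp_inner (t • w)

end HasExpMoments

variable [SecondCountableTopology E]

lemma integrable_exp_inner_smul {F : Type*} [NormedAddCommGroup F] [NormedSpace ℝ F] {ψ : E → F}
    (hψ : ∀ c : ℝ, Integrable (fun y => exp (c * ‖y‖) • ψ y) μ) (x : E) :
    Integrable (fun y => exp ⟪y, x⟫ • ψ y) μ := by
  have hψm : AEStronglyMeasurable ψ μ := by simpa using (hψ 0).aestronglyMeasurable
  refine (hψ ‖x‖).mono (AEStronglyMeasurable.smul (by fun_prop) hψm) (.of_forall fun y => ?_)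
  simp only [norm_smul, norm_of_nonneg (exp_nonneg _)]
  gcongr
  exact inner_le_norm_mul_norm_comm y x

theorem hasFDerivAt_integral_exp_inner_smul {F : Type*} [NormedAddCommGroup F] [NormedSpace ℝ F]
    {ψ : E → F} (hψ : ∀ c : ℝ, Integrable (fun y => exp (c * ‖y‖) • ψ y) μ) (x : E) :
    HasFDerivAt (fun z => ∫ y, exp ⟪y, z⟫ • ψ y ∂μ)
      (∫ y, exp ⟪y, x⟫ • (innerSL ℝ y).smulRight (ψ y) ∂μ) x := by
  have hψm : AEStronglyMeasurable ψ μ := by simpa using (hψ 0).aestronglyMeasurable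
  have hexp (z : E) : AEStronglyMeasurable (fun y => exp ⟪y, z⟫) μ := by fun_prop
  have hsmul : AEStronglyMeasurable (fun y => (innerSL ℝ y).smulRight (ψ y)) μ :=
    (ContinuousLinearMap.smulRightL ℝ E F).aestronglyMeasurable_comp₂
      ((innerSL ℝ).continuous.comp_aestronglyMeasurable aestronglyMeasurable_id) hψm
  refine hasFDerivAt_integral_of_dominated_of_fderiv_le (Metric.ball_mem_nhds x one_pos)
    (F' := fun z y => exp ⟪y, z⟫ • (innerSL ℝ y).smulRight (ψ y))
    (.of_forall fun z => (hexp z).smul hψm) (integrable_exp_inner_smul hψ x)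
    ((hexp x).smul hsmul) (.of_forall fun y z hz => ?_) (hψ (‖x‖ + 2)).norm
    (.of_forall fun y z _ => ?_)
  · have hzx : ‖z‖ ≤ ‖x‖ + 1 := by
      linarith [norm_le_norm_add_norm_sub' z x, mem_ball_iff_norm.1 hz]
    simp only [norm_smul, ContinuousLinearMap.norm_smulRight_apply, innerSL_apply_norm,
      norm_of_nonneg (exp_nonneg _), ← mul_assoc]
    gcongr
    calc exp ⟪y, z⟫ * ‖y‖ ≤ exp ((‖x‖ + 1) * ‖y‖) * exp ‖y‖ := by
          gcongr
          · exact (inner_le_norm_mul_norm_comm y z).trans (by gcongr)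
          · linarith [add_one_le_exp ‖y‖]
      _ = exp ((‖x‖ + 2) * ‖y‖) := by rw [← exp_add]; ring_nf
  · refine (((innerSL ℝ y).hasFDerivAt (x := z)).exp.smul_const (ψ y)).congr_fderiv ?_
    ext u
    simp [mul_smul]

namespace HasExpMoments

variable [CompleteSpace E]

lemma hasGradientAt_integral_exp_inner (hμ : HasExpMoments μ) (x : E) :
    HasGradientAt (fun z => ∫ y, exp ⟪y, z⟫ ∂μ) (∫ y, exp ⟪y, x⟫ • y ∂μ) x := by
  have hderiv := hasFDerivAt_integral_exp_inner_smul (ψ := fun _ : E => (1 : ℝ))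
    (fun c => by simpa using hμ c) x
  simp only [smul_eq_mul, mul_one] at hderiv
  refine hasGradientAt_iff_hasFDerivAt.2 (hderiv.congr_fderiv ?_)
  have hcomm := (innerSL ℝ).integral_comp_comm
    (integrable_exp_inner_smul hμ.integrable_exp_norm_smul_id x)
  have hone (y : E) : (innerSL ℝ y).smulRight (1 : ℝ) = innerSL ℝ y := by ext; simp
  simp only [map_smul] at hcomm
  simp only [hone, hcomm]
  rfl

theorem hasGradientAt_log_integral_exp_inner [NeZero μ] (hμ : HasExpMoments μ) (x : E) :
    HasGradientAt (fun z => log (∫ y, exp ⟪y, z⟫ ∂μ)) (∫ y, y ∂(μ.tilted fun y => ⟪y, x⟫)) x := by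
  have hpos : 0 < ∫ y, exp ⟪y, x⟫ ∂μ := integral_exp_pos (hμ.integrable_exp_inner x)
  have h := (hμ.hasGradientAt_integral_exp_inner x).hasFDerivAt.log hpos.ne'
  rw [hasGradientAt_iff_hasFDerivAt, integral_tilted_inner_eq_smul]
  simpa using h

theorem differentiable_integral_tilted_inner [NeZero μ] (hμ : HasExpMoments μ) :
    Differentiable ℝ fun z => ∫ y, y ∂(μ.tilted fun y => ⟪y, z⟫) := fun x => by
  have hpos : 0 < ∫ y, exp ⟪y, x⟫ ∂μ := integral_exp_pos (hμ.integrable_exp_inner x)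
  simp only [integral_tilted_inner_eq_smul]
  exact ((hμ.hasGradientAt_integral_exp_inner x).hasFDerivAt.differentiableAt.inv hpos.ne').smul
    (hasFDerivAt_integral_exp_inner_smul hμ.integrable_exp_norm_smul_id x).differentiableAt

lemma inner_integral_tilted_inner_add_smul (hμ : HasExpMoments μ) (x w : E) (t : ℝ) :
    ⟪w, ∫ y, y ∂(μ.tilted fun y => ⟪y, x + t • w⟫)⟫
      = deriv (cgf (fun y => ⟪w, y⟫) (μ.tilted fun y => ⟪y, x⟫)) t := by
  have hsplit : (μ.tilted fun y => ⟪y, x + t • w⟫)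
      = (μ.tilted fun y => ⟪y, x⟫).tilted (fun y => t * ⟪w, y⟫) := by
    rw [tilted_tilted (hμ.integrable_exp_inner x)]
    congr with y
    simp [inner_add_right, real_inner_smul_right, real_inner_comm]
  rw [← integral_inner (hμ.tilted_inner _).integrable_id, hsplit]
  refine integral_tilted_mul_self ?_
  simp [(hμ.tilted_inner x).integrableExpSet_inner]

theorem inner_fderiv_integral_tilted_inner [NeZero μ] (hμ : HasExpMoments μ) (x w : E) :
    ⟪w, fderiv ℝ (fun z => ∫ y, y ∂(μ.tilted fun y => ⟪y, z⟫)) x w⟫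
      = Var[fun y => ⟪w, y⟫; μ.tilted fun y => ⟪y, x⟫] := by
  set π₀ := μ.tilted fun y => ⟪y, x⟫ with hπ₀
  have hprob : IsProbabilityMeasure π₀ := isProbabilityMeasure_tilted (hμ.integrable_exp_inner x)
  have hline : HasDerivAt (fun t : ℝ => x + t • w) w 0 := by
    simpa using ((hasDerivAt_id (0 : ℝ)).smul_const w).const_add x
  have hmean := (hμ.differentiable_integral_tilted_inner (x + (0 : ℝ) • w)).hasFDerivAt
  have hderiv := ((innerSL ℝ w).hasFDerivAt.comp_hasDerivAt 0 (hmean.comp_hasDerivAt 0 hline)).deriv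
  have hvar := variance_tilted_mul (t := 0) (X := fun y => ⟪w, y⟫) (μ := π₀)
    (by simp [(hμ.tilted_inner x).integrableExpSet_inner, hπ₀])
  rw [iteratedDeriv_succ, iteratedDeriv_one] at hvar
  simp only [zero_mul, tilted_const] at hvar
  rw [hvar]
  simp only [zero_smul, add_zero, innerSL_apply_apply] at hderiv
  rw [← hderiv]
  congr 1 with t
  exact hμ.inner_integral_tilted_inner_add_smul x w t

end HasExpMoments

end ExponentialFamily

section GaussianChannel

open ProbabilityTheory

lemma tilted_add_const {Ω : Type*} [MeasurableSpace Ω] (μ : Measure Ω) (h : Ω → ℝ) (r : ℝ) :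
    μ.tilted (fun ω => h ω + r) = μ.tilted h := by
  simp only [Measure.tilted, exp_add, integral_mul_const, mul_div_mul_right _ _ (exp_ne_zero r)]

section GaussianTilt

variable {E : Type*} [NormedAddCommGroup E] [MeasurableSpace E] {ν : Measure E} {β : ℝ}

/-- The probability measure with density proportional to `exp (-β * ‖y‖ ^ 2)` with respect to
`ν`; the posteriors of a Gaussian channel with prior `ν` form an exponential family over it. -/
def gaussianTilt (ν : Measure E) (β : ℝ) : Measure E :=
  ν.tilted fun y => -β * ‖y‖ ^ 2

variable [BorelSpace E] [IsFiniteMeasure ν]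

lemma integrable_exp_neg_mul_norm_sq (hβ : 0 ≤ β) :
    Integrable (fun y => exp (-β * ‖y‖ ^ 2)) ν := by
  refine (integrable_const 1).mono' (by fun_prop) (.of_forall fun y => ?_)
  rw [norm_of_nonneg (exp_nonneg _), exp_le_one_iff]
  nlinarith [sq_nonneg ‖y‖]

lemma neZero_gaussianTilt [NeZero ν] (hβ : 0 ≤ β) : NeZero (gaussianTilt ν β) :=
  have := isProbabilityMeasure_tilted (integrable_exp_neg_mul_norm_sq (ν := ν) hβ)
  inferInstanceAs (NeZero (ν.tilted _))

lemma hasExpMoments_gaussianTilt (hβ : 0 < β) : HasExpMoments (gaussianTilt ν β) := fun r => by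
  refine (integrable_tilted_iff (integrable_exp_neg_mul_norm_sq hβ.le) _).2 ?_
  refine (integrable_const (exp (r ^ 2 / (4 * β)))).mono' (by fun_prop) (.of_forall fun y => ?_)
  rw [smul_eq_mul, ← exp_add, norm_of_nonneg (exp_nonneg _), exp_le_exp,
    le_div_iff₀ (by positivity)]
  linarith [sq_nonneg (2 * β * ‖y‖ - r)]

end GaussianTilt

variable {E : Type*} [NormedAddCommGroup E] [InnerProductSpace ℝ E]

lemma neg_norm_sub_smul_sq_div (a b : ℝ) (x y : E) :
    -‖x - b • y‖ ^ 2 / (2 * a ^ 2)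
      = -(b ^ 2 / (2 * a ^ 2)) * ‖y‖ ^ 2 + ⟪y, (b / a ^ 2) • x⟫ + -‖x‖ ^ 2 / (2 * a ^ 2) := by
  rw [norm_sub_sq_real, norm_smul, norm_eq_abs, mul_pow, sq_abs, real_inner_smul_right,
    real_inner_smul_right, real_inner_comm]
  ring

variable [MeasurableSpace E]

/-- The density at `x` of `a • Z + b • Y`, where `Y ∼ ν` and `Z` is an independent standard
Gaussian vector. -/
def marginalDensity (ν : Measure E) (a b : ℝ) (x : E) : ℝ :=
  ∫ y, (2 * π * a ^ 2) ^ (-(Module.finrank ℝ E : ℝ) / 2)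
    * exp (-‖x - b • y‖ ^ 2 / (2 * a ^ 2)) ∂ν

/-- The conditional law of `Y` given `a • Z + b • Y = x`, where `Y ∼ ν` and `Z` is an independent
standard Gaussian vector. -/
def channelPosterior (ν : Measure E) (a b : ℝ) (x : E) : Measure E :=
  ν.tilted fun y => -‖x - b • y‖ ^ 2 / (2 * a ^ 2)

/-- The velocity field at a fixed time of the interpolation `a • Z + b • Y`; the numbers `a'` and
`b'` stand for the time derivatives of `a` and `b`. -/
def velocity [CompleteSpace E] (ν : Measure E) (a b a' b' : ℝ) (x : E) : E :=
  (b' / b) • x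
    + ((b' / b) * a ^ 2 - a' * a) • gradient (fun z => log (marginalDensity ν a b z)) x

variable [BorelSpace E] {ν : Measure E} [IsFiniteMeasure ν] {a b : ℝ}

lemma channelPosterior_eq_tilted (x : E) :
    channelPosterior ν a b x
      = (gaussianTilt ν (b ^ 2 / (2 * a ^ 2))).tilted fun y => ⟪y, (b / a ^ 2) • x⟫ := by
  simp only [channelPosterior, neg_norm_sub_smul_sq_div]
  rw [tilted_add_const, gaussianTilt,
    tilted_tilted (integrable_exp_neg_mul_norm_sq (by positivity))]
  rfl

lemma integrable_exp_neg_norm_sub_smul_sq_div (x : E) :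
    Integrable (fun y => exp (-‖x - b • y‖ ^ 2 / (2 * a ^ 2))) ν := by
  have hcont : Continuous fun y => exp (-‖x - b • y‖ ^ 2 / (2 * a ^ 2)) := by fun_prop
  refine (integrable_const (1 : ℝ)).mono' hcont.aestronglyMeasurable (.of_forall fun y => ?_)
  rw [norm_of_nonneg (exp_nonneg _), exp_le_one_iff, neg_div, neg_nonpos]
  positivity

lemma isProbabilityMeasure_channelPosterior [NeZero ν] (x : E) :
    IsProbabilityMeasure (channelPosterior ν a b x) :=
  isProbabilityMeasure_tilted (integrable_exp_neg_norm_sub_smul_sq_div x)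

lemma marginalDensity_eq_mul_integral_exp_inner [NeZero ν] (x : E) :
    marginalDensity ν a b x
      = (2 * π * a ^ 2) ^ (-(Module.finrank ℝ E : ℝ) / 2)
        * (∫ y, exp (-(b ^ 2 / (2 * a ^ 2)) * ‖y‖ ^ 2) ∂ν)
        * (exp (-‖x‖ ^ 2 / (2 * a ^ 2))
          * ∫ y, exp ⟪y, (b / a ^ 2) • x⟫ ∂(gaussianTilt ν (b ^ 2 / (2 * a ^ 2)))) := by
  have hpos := integral_exp_pos (integrable_exp_neg_mul_norm_sq (ν := ν)
    (β := b ^ 2 / (2 * a ^ 2)) (by positivity))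
  rw [marginalDensity, gaussianTilt, integral_exp_tilted, integral_const_mul]
  simp only [neg_norm_sub_smul_sq_div, exp_add _ (-‖x‖ ^ 2 / (2 * a ^ 2)), integral_mul_const,
    Pi.add_apply]
  rw [mul_assoc, mul_assoc, mul_left_comm (∫ y, _ ∂ν), mul_div_cancel₀ _ hpos.ne',
    mul_comm (exp _)]

variable [SecondCountableTopology E] [CompleteSpace E]

theorem hasGradientAt_log_marginalDensity [NeZero ν] (ha : a ≠ 0) (hb : b ≠ 0) (x : E) :
    HasGradientAt (fun z => log (marginalDensity ν a b z))
      ((b / a ^ 2) • ∫ y, y ∂(channelPosterior ν a b x) - (a ^ 2)⁻¹ • x) x := by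
  set μ₀ := gaussianTilt ν (b ^ 2 / (2 * a ^ 2))
  have hμ₀ : HasExpMoments μ₀ := hasExpMoments_gaussianTilt (by positivity)
  have : NeZero μ₀ := neZero_gaussianTilt (by positivity)
  have hlog (z : E) : log (marginalDensity ν a b z)
      = log ((2 * π * a ^ 2) ^ (-(Module.finrank ℝ E : ℝ) / 2)
          * ∫ y, exp (-(b ^ 2 / (2 * a ^ 2)) * ‖y‖ ^ 2) ∂ν)
        + (-‖z‖ ^ 2 * (2 * a ^ 2)⁻¹ + log (∫ y, exp ⟪y, (b / a ^ 2) • z⟫ ∂μ₀)) := by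
    have hconst := integral_exp_pos (integrable_exp_neg_mul_norm_sq (ν := ν)
      (β := b ^ 2 / (2 * a ^ 2)) (by positivity))
    have hpos : 0 < ∫ y, exp ⟪y, (b / a ^ 2) • z⟫ ∂μ₀ :=
      integral_exp_pos (hμ₀.integrable_exp_inner _)
    rw [marginalDensity_eq_mul_integral_exp_inner, log_mul (by positivity) (by positivity),
      log_mul (exp_ne_zero _) hpos.ne', log_exp, div_eq_mul_inv (-‖z‖ ^ 2)]
  have hquad := (hasStrictFDerivAt_norm_sq x).hasFDerivAt.neg.mul_const (2 * a ^ 2)⁻¹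
  have hlaplace := (hμ₀.hasGradientAt_log_integral_exp_inner ((b / a ^ 2) • x)).hasFDerivAt.comp x
    ((hasFDerivAt_id (𝕜 := ℝ) x).const_smul (b / a ^ 2))
  simp only [hlog, channelPosterior_eq_tilted]
  refine hasGradientAt_iff_hasFDerivAt.2 (((hquad.add hlaplace).const_add _).congr_fderiv ?_)
  ext u
  simp only [mul_inv_rev, smul_neg, ContinuousLinearMap.comp_smulₛₗ, map_div₀, ringHom_apply,
    ContinuousLinearMap.comp_id, add_apply, neg_apply, smul_apply, coe_innerSL_apply,
    nsmul_eq_mul, Nat.cast_ofNat, smul_eq_mul, InnerProductSpace.toDual_apply_apply, map_sub,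
    map_smul, sub_apply]
  ring

theorem inner_fderiv_velocity [NeZero ν] (ha : a ≠ 0) (hb : b ≠ 0) (a' b' : ℝ) (x w : E) :
    ⟪w, fderiv ℝ (velocity ν a b a' b') x w⟫
      = (b' / b) * ‖w‖ ^ 2 + ((b' / b) * a ^ 2 - a' * a)
        * ((b / a ^ 2) ^ 2 * Var[fun y => ⟪w, y⟫; channelPosterior ν a b x]
          - ‖w‖ ^ 2 / a ^ 2) := by
  set μ₀ := gaussianTilt ν (b ^ 2 / (2 * a ^ 2))
  have hμ₀ : HasExpMoments μ₀ := hasExpMoments_gaussianTilt (by positivity)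
  have : NeZero μ₀ := neZero_gaussianTilt (by positivity)
  have hmean := (hμ₀.differentiable_integral_tilted_inner ((b / a ^ 2) • x)).hasFDerivAt.comp x
    ((hasFDerivAt_id (𝕜 := ℝ) x).const_smul (b / a ^ 2))
  have hscore := (hmean.const_smul (b / a ^ 2)).sub
    ((hasFDerivAt_id (𝕜 := ℝ) x).const_smul (a ^ 2)⁻¹)
  have hvelocity := ((hasFDerivAt_id (𝕜 := ℝ) x).const_smul (b' / b)).add
    (hscore.const_smul ((b' / b) * a ^ 2 - a' * a))
  have hfderiv := hvelocity.congr_of_eventuallyEq (f₁ := velocity ν a b a' b')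
      (.of_forall fun z => by
    simp [velocity, (hasGradientAt_log_marginalDensity ha hb z).gradient,
      channelPosterior_eq_tilted, μ₀])
  rw [hfderiv.fderiv, channelPosterior_eq_tilted, ← hμ₀.inner_fderiv_integral_tilted_inner]
  simp only [add_apply, sub_apply, smul_apply, ContinuousLinearMap.comp_apply,
    ContinuousLinearMap.id_apply, map_smul, inner_add_right, inner_sub_right,
    real_inner_smul_right, real_inner_self_eq_norm_sq]
  ring

end GaussianChannel

section RealVariable

open Filter ProbabilityTheory Topology

lemma abs_deriv_le_of_abs_sub_le {φ g : ℝ → ℝ} {φ' g' x : ℝ} (hφ : HasDerivAt φ φ' x)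
    (hg : HasDerivAt g g' x) (hle : ∀ t > 0, |φ (x + t) - φ x| ≤ g (x + t) - g x) : |φ'| ≤ g' := by
  refine le_of_tendsto_of_tendsto hφ.tendsto_slope_zero_right.abs hg.tendsto_slope_zero_right ?_
  filter_upwards [self_mem_nhdsWithin] with t (ht : 0 < t)
  rw [smul_eq_mul, smul_eq_mul, abs_mul, abs_of_pos (inv_pos.2 ht)]
  exact mul_le_mul_of_nonneg_left (hle t ht) (inv_nonneg.2 ht.le)

variable {Ω : Type*} [MeasurableSpace Ω] {μ : Measure Ω} [IsProbabilityMeasure μ] {X : Ω → ℝ}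

lemma integral_abs_sub_integral_le_sqrt_variance (hX : MemLp X 2 μ) :
    ∫ ω, |X ω - μ[X]| ∂μ ≤ √(Var[X; μ]) := by
  have hY : MemLp (fun ω => |X ω - μ[X]|) 2 μ := (hX.sub (memLp_const _)).abs
  refine le_sqrt_of_sq_le ?_
  have hvar := variance_eq_sub hY
  simp only [Pi.pow_apply, sq_abs, ← variance_eq_integral hX.aemeasurable] at hvar
  linarith [variance_nonneg (fun ω => |X ω - μ[X]|) μ]

lemma hasDerivAt_integral_exp_mul_sub (hX : 0 ∈ interior (integrableExpSet X μ)) (q : ℝ) :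
    HasDerivAt (fun t => ∫ ω, exp (t * X ω) * (X ω - (μ[X] + t * q)) ∂μ) (Var[X; μ] - q) 0 := by
  have hmgf := hasDerivAt_mgf hX
  have hmgf' := hasDerivAt_integral_pow_mul_exp_real hX 1
  have haffine : HasDerivAt (fun t : ℝ => μ[X] + t * q) q 0 := by
    simpa using ((hasDerivAt_id (0 : ℝ)).mul_const q).const_add μ[X]
  have hderiv := hmgf'.sub (haffine.mul hmgf)
  have hvar := variance_eq_sub (memLp_of_mem_interior_integrableExpSet hX 2)
  simp only [pow_one, Nat.reduceAdd, zero_mul, exp_zero, mul_one, add_zero, mgf_zero]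
    at hderiv
  have hvalue : ∫ ω, X ω ^ 2 ∂μ - (q + μ[X] * μ[X]) = Var[X; μ] - q := by
    rw [hvar]
    simp only [Pi.pow_apply]
    ring
  refine (hderiv.congr_deriv hvalue).congr_of_eventuallyEq ?_
  filter_upwards [isOpen_interior.mem_nhds hX] with t ht
  have hint := integrable_pow_mul_exp_of_mem_interior_integrableExpSet ht 1
  have hint₀ : Integrable (fun ω => exp (t * X ω)) μ :=
    interior_subset (s := integrableExpSet X μ) ht
  simp only [pow_one] at hint
  simp only [Pi.sub_apply, Pi.mul_apply, mgf]
  rw [← integral_const_mul, ← integral_sub hint (hint₀.const_mul _)]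
  congr with ω
  ring

end RealVariable

section PerturbedGaussian

open ProbabilityTheory
open scoped NNReal

variable {E : Type*} [NormedAddCommGroup E] [InnerProductSpace ℝ E]

lemma perturbedGaussian_density_add_mul_exp (k : ℝ) (c u : E) {f : E → ℝ} {y : E} (hy : f y ≠ 0)
    (r : ℝ) :
    exp (-(k / 2) * ‖y + u - c‖ ^ 2) * f (y + u) * (exp (k * ⟪y + u - c, u⟫) * r)
      = exp (k / 2 * ‖u‖ ^ 2)
        * (exp (-(k / 2) * ‖y - c‖ ^ 2) * f y * (r * (f (y + u) / f y))) := by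
  have hexp : exp (-(k / 2) * ‖y + u - c‖ ^ 2) * exp (k * ⟪y + u - c, u⟫)
      = exp (k / 2 * ‖u‖ ^ 2) * exp (-(k / 2) * ‖y - c‖ ^ 2) := by
    rw [← exp_add, ← exp_add, add_sub_right_comm, norm_add_sq_real, inner_add_left,
      real_inner_self_eq_norm_sq]
    ring_nf
  have hquot : f y * (f (y + u) / f y) = f (y + u) := mul_div_cancel₀ _ hy
  linear_combination f (y + u) * r * hexp
    - exp (k / 2 * ‖u‖ ^ 2) * exp (-(k / 2) * ‖y - c‖ ^ 2) * r * hquot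

variable [FiniteDimensional ℝ E] [MeasurableSpace E] [BorelSpace E] {k : ℝ} {c : E} {L : ℝ≥0}
  {f : E → ℝ}

/-- The measure with Lebesgue density `f` times the *unnormalised* Gaussian density of mean `c`
and covariance `k⁻¹ I`; normalising constants are absorbed into `f`. -/
def perturbedGaussian (k : ℝ) (c : E) (f : E → ℝ) : Measure E :=
  volume.withDensity fun y => ENNReal.ofReal (exp (-(k / 2) * ‖y - c‖ ^ 2) * f y)

namespace IsLogLipschitz

lemma withDensity_gaussian_eq_perturbedGaussian (hf : IsLogLipschitz L f) {C : ℝ} (hC : 0 ≤ C) :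
    (volume.withDensity fun y => ENNReal.ofReal (C * exp (-‖y‖ ^ 2 / 2))).withDensity
        (fun y => ENNReal.ofReal (f y))
      = perturbedGaussian (1 : ℝ) (0 : E) fun y => C * f y := by
  have hcont := hf.continuous
  rw [perturbedGaussian, ← withDensity_mul _ (by fun_prop) (by fun_prop)]
  congr with y
  rw [Pi.mul_apply, ← ENNReal.ofReal_mul (by positivity), sub_zero]
  ring_nf

lemma integral_perturbedGaussian (hf : IsLogLipschitz L f) (k : ℝ) (c : E) (ψ : E → ℝ) :
    ∫ y, ψ y ∂(perturbedGaussian k c f) = ∫ y, exp (-(k / 2) * ‖y - c‖ ^ 2) * f y * ψ y := by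
  have hcont := hf.continuous
  rw [perturbedGaussian, integral_withDensity_eq_integral_toReal_smul (by fun_prop)
    (.of_forall fun _ => ENNReal.ofReal_lt_top)]
  congr with y
  rw [ENNReal.toReal_ofReal (mul_pos (exp_pos _) (hf.pos y)).le, smul_eq_mul]

lemma integrable_perturbedGaussian_iff (hf : IsLogLipschitz L f) {ψ : E → ℝ} :
    Integrable ψ (perturbedGaussian k c f) ↔
      Integrable fun y => exp (-(k / 2) * ‖y - c‖ ^ 2) * f y * ψ y := by
  have hcont := hf.continuous
  rw [perturbedGaussian, integrable_withDensity_iff_integrable_smul' (by fun_prop)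
    (.of_forall fun _ => ENNReal.ofReal_lt_top)]
  congr! 2 with y
  rw [ENNReal.toReal_ofReal (mul_pos (exp_pos _) (hf.pos y)).le, smul_eq_mul]

theorem integral_exp_inner_mul_comp_sub (hf : IsLogLipschitz L f) (ψ : E → ℝ) (u : E) :
    ∫ y, exp (k * ⟪y - c, u⟫) * ψ (y - u) ∂(perturbedGaussian k c f)
      = exp (k / 2 * ‖u‖ ^ 2)
        * ∫ y, ψ y * (f (y + u) / f y) ∂(perturbedGaussian k c f) := by
  rw [hf.integral_perturbedGaussian, hf.integral_perturbedGaussian,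
    ← integral_add_right_eq_self _ u, ← integral_const_mul]
  congr with y
  rw [add_sub_cancel_right, perturbedGaussian_density_add_mul_exp k c u (hf.pos y).ne']

lemma integrable_exp_inner_perturbedGaussian (hf : IsLogLipschitz L f)
    [IsFiniteMeasure (perturbedGaussian k c f)] (u : E) :
    Integrable (fun y => exp (k * ⟪y - c, u⟫)) (perturbedGaussian k c f) := by
  have hratio := hf.integrable_perturbedGaussian_iff.1
    (hf.integrable_mul_div (integrable_const (μ := perturbedGaussian k c f) (1 : ℝ)) u)
  refine hf.integrable_perturbedGaussian_iff.2 <|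
    ((hratio.const_mul (exp (k / 2 * ‖u‖ ^ 2))).comp_sub_right u).congr (.of_forall fun y => ?_)
  simpa using (perturbedGaussian_density_add_mul_exp k c u (hf.pos (y - u)).ne' 1).symm

lemma integrableExpSet_inner_perturbedGaussian (hf : IsLogLipschitz L f) (hk : k ≠ 0)
    [IsFiniteMeasure (perturbedGaussian k c f)] (w : E) :
    integrableExpSet (fun y => ⟪y - c, w⟫) (perturbedGaussian k c f) = univ := by
  refine eq_univ_of_forall fun t => ?_
  have h := hf.integrable_exp_inner_perturbedGaussian (k := k) (c := c) ((t / k) • w)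
  simpa only [integrableExpSet, Set.mem_ofPred_eq, real_inner_smul_right, ← mul_assoc,
    mul_div_cancel₀ t hk] using h

lemma zero_mem_interior_integrableExpSet_inner (hf : IsLogLipschitz L f) (hk : k ≠ 0)
    [IsFiniteMeasure (perturbedGaussian k c f)] (w : E) :
    0 ∈ interior (integrableExpSet (fun y => ⟪y - c, w⟫) (perturbedGaussian k c f)) := by
  rw [hf.integrableExpSet_inner_perturbedGaussian hk, interior_univ]
  exact mem_univ 0

lemma abs_integral_exp_inner_mul_sub_le (hf : IsLogLipschitz L f) (hk : 0 < k)
    [IsProbabilityMeasure (perturbedGaussian k c f)] {w : E} {m : ℝ}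
    (hm : ∫ y, ⟪y - c, w⟫ ∂(perturbedGaussian k c f) = m) {t : ℝ} (ht : 0 ≤ t) :
    |∫ y, exp (t * ⟪y - c, w⟫) * (⟪y - c, w⟫ - (m + t * (‖w‖ ^ 2 / k)))
        ∂(perturbedGaussian k c f)|
      ≤ exp (k / 2 * (t / k * ‖w‖) ^ 2) * ((exp (L * (t / k * ‖w‖)) - 1)
        * ∫ y, |⟪y - c, w⟫ - m| ∂(perturbedGaussian k c f)) := by
  set π₀ := perturbedGaussian k c f
  set u : E := (t / k) • w
  have hu : ‖u‖ = t / k * ‖w‖ := by rw [norm_smul, norm_of_nonneg (by positivity)]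
  have hshift : ∫ y, exp (t * ⟪y - c, w⟫) * (⟪y - c, w⟫ - (m + t * (‖w‖ ^ 2 / k))) ∂π₀
      = ∫ y, exp (k * ⟪y - c, u⟫) * (⟪y - u - c, w⟫ - m) ∂π₀ := by
    congr with y
    have hinner : k * ⟪y - c, u⟫ = t * ⟪y - c, w⟫ := by
      rw [real_inner_smul_right, ← mul_assoc, mul_div_cancel₀ t hk.ne']
    have htranslate : ⟪y - u - c, w⟫ = ⟪y - c, w⟫ - t * (‖w‖ ^ 2 / k) := by
      rw [sub_right_comm, inner_sub_left, real_inner_smul_left, real_inner_self_eq_norm_sq]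
      ring
    rw [hinner, htranslate]
    ring
  have hint : Integrable (fun y => ⟪y - c, w⟫) π₀ :=
    integrable_of_mem_interior_integrableExpSet
      (hf.zero_mem_interior_integrableExpSet_inner hk.ne' w)
  have hcentered : ∫ y, ⟪y - c, w⟫ - m ∂π₀ = 0 := by
    rw [integral_sub hint (integrable_const m), hm, integral_const, probReal_univ, one_smul,
      sub_self]
  have hratio := hf.abs_integral_mul_div_sub_le (hint.sub (integrable_const m)) u
  simp only [Pi.sub_apply, hcentered, sub_zero, hu] at hratio
  rw [hshift, hf.integral_exp_inner_mul_comp_sub (fun y => ⟪y - c, w⟫ - m), abs_mul,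
    abs_of_pos (exp_pos _), hu]
  exact mul_le_mul_of_nonneg_left hratio (exp_nonneg _)

theorem abs_variance_inner_sub_le (hf : IsLogLipschitz L f) (hk : 0 < k)
    [IsProbabilityMeasure (perturbedGaussian k c f)] (w : E) :
    |Var[fun y => ⟪w, y⟫; perturbedGaussian k c f] - ‖w‖ ^ 2 / k|
      ≤ L * ‖w‖ / k * √(Var[fun y => ⟪w, y⟫; perturbedGaussian k c f]) := by
  set π₀ := perturbedGaussian k c f
  set X : E → ℝ := fun y => ⟪y - c, w⟫ with hX
  have hvar : Var[fun y => ⟪w, y⟫; π₀] = Var[X; π₀] := by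
    simp only [hX, inner_sub_left]
    rw [variance_sub_const (by fun_prop)]
    simp only [real_inner_comm]
  have hexp : 0 ∈ interior (integrableExpSet X π₀) :=
    hf.zero_mem_interior_integrableExpSet_inner hk.ne' w
  have hX₂ : MemLp X 2 π₀ := memLp_of_mem_interior_integrableExpSet hexp 2
  have hbound : HasDerivAt (fun t : ℝ => exp (k / 2 * (t / k * ‖w‖) ^ 2)
      * ((exp (L * (t / k * ‖w‖)) - 1) * ∫ y, |X y - π₀[X]| ∂π₀))
      (L * ‖w‖ / k * ∫ y, |X y - π₀[X]| ∂π₀) 0 := by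
    have hscale : HasDerivAt (fun t : ℝ => t / k * ‖w‖) (1 / k * ‖w‖) 0 :=
      ((hasDerivAt_id (0 : ℝ)).div_const k).mul_const ‖w‖
    have hexp₁ := ((hscale.const_mul (L : ℝ)).exp.sub_const 1).mul_const
      (∫ y, |X y - π₀[X]| ∂π₀)
    refine (((hscale.pow 2).const_mul (k / 2)).exp.mul hexp₁).congr_deriv ?_
    simp only [zero_div, zero_mul, mul_zero, exp_zero, sub_self, one_mul, Pi.pow_apply, ne_eq,
      OfNat.ofNat_ne_zero, not_false_eq_true, zero_pow]
    ring
  rw [hvar]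
  have hle := abs_deriv_le_of_abs_sub_le (hasDerivAt_integral_exp_mul_sub hexp (‖w‖ ^ 2 / k))
    hbound fun t ht => by
      simpa [integral_sub (hX₂.integrable one_le_two) (integrable_const _)] using
        hf.abs_integral_exp_inner_mul_sub_le hk rfl ht.le
  refine hle.trans (mul_le_mul_of_nonneg_left ?_ (by positivity))
  exact integral_abs_sub_integral_le_sqrt_variance hX₂

end IsLogLipschitz

end PerturbedGaussian

section Conjugacy

open scoped NNReal

variable {E : Type*} [NormedAddCommGroup E] [InnerProductSpace ℝ E]

lemma exists_mul_norm_sub_sq_add_mul_norm_sub_smul_sq {k l : ℝ} (b : ℝ)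
    (hk : k + l * b ^ 2 ≠ 0) (c x : E) :
    ∃ (c' : E) (R : ℝ), ∀ y, k * ‖y - c‖ ^ 2 + l * ‖x - b • y‖ ^ 2
      = (k + l * b ^ 2) * ‖y - c'‖ ^ 2 + R := by
  refine ⟨(k + l * b ^ 2)⁻¹ • (k • c + (l * b) • x), k * ‖c‖ ^ 2 + l * ‖x‖ ^ 2
    - (k + l * b ^ 2)⁻¹ * ‖k • c + (l * b) • x‖ ^ 2, fun y => ?_⟩
  simp only [norm_sub_sq_real, norm_smul, real_inner_smul_right, inner_add_right, norm_eq_abs,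
    mul_pow, sq_abs, real_inner_comm y x]
  field_simp
  ring

variable [FiniteDimensional ℝ E] [MeasurableSpace E] [BorelSpace E] {k : ℝ} {c : E} {L : ℝ≥0}
  {f : E → ℝ}

theorem IsLogLipschitz.exists_channelPosterior_eq_perturbedGaussian (hf : IsLogLipschitz L f)
    (hk : 0 < k) [IsFiniteMeasure (perturbedGaussian k c f)] [NeZero (perturbedGaussian k c f)]
    (a b : ℝ) (x : E) :
    ∃ (c' : E) (C : ℝ), 0 < C ∧ channelPosterior (perturbedGaussian k c f) a b x
      = perturbedGaussian (k + b ^ 2 / a ^ 2) c' fun y => C * f y := by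
  have hcont := hf.continuous
  obtain ⟨c', R, hR⟩ := exists_mul_norm_sub_sq_add_mul_norm_sub_smul_sq b
    (k := k) (l := (a ^ 2)⁻¹) (by positivity) c x
  have hZ := integral_exp_pos (integrable_exp_neg_norm_sub_smul_sq_div (a := a) (b := b)
    (ν := perturbedGaussian k c f) x)
  refine ⟨c', exp (-R / 2) / ∫ y, exp (-‖x - b • y‖ ^ 2 / (2 * a ^ 2)) ∂(perturbedGaussian k c f),
    by positivity, ?_⟩
  rw [channelPosterior, Measure.tilted]
  set Z := ∫ y, exp (-‖x - b • y‖ ^ 2 / (2 * a ^ 2)) ∂(perturbedGaussian k c f)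
  rw [perturbedGaussian, ← withDensity_mul _ (by fun_prop) (by fun_prop), perturbedGaussian]
  congr with y
  have hexp : exp (-(k / 2) * ‖y - c‖ ^ 2) * exp (-‖x - b • y‖ ^ 2 / (2 * a ^ 2))
      = exp (-((k + b ^ 2 / a ^ 2) / 2) * ‖y - c'‖ ^ 2) * exp (-R / 2) := by
    rw [← exp_add, ← exp_add]
    congr 1
    linear_combination -(1 / 2) * hR y
  rw [Pi.mul_apply, ← ENNReal.ofReal_mul (mul_pos (exp_pos _) (hf.pos y)).le]
  congr 1
  linear_combination f y / Z * hexp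

end Conjugacy

section JacobianBounds

open ProbabilityTheory
open scoped NNReal

lemma abs_sq_mul_sub_mul_sq_le {k L n V : ℝ} (hk : 0 < k) (hL : 0 ≤ L) (hn : 0 ≤ n)
    (hV : 0 ≤ V) (h : |V - n ^ 2 / k| ≤ L * n / k * √V) :
    |k ^ 2 * V - k * n ^ 2| ≤ L * (L + √k) * n ^ 2 := by
  have hscaled : |k ^ 2 * V - k * n ^ 2| ≤ L * n * (k * √V) := by
    calc |k ^ 2 * V - k * n ^ 2| = k ^ 2 * |V - n ^ 2 / k| := by
          rw [← abs_of_pos (pow_pos hk 2), ← abs_mul, abs_of_pos (pow_pos hk 2)]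
          congr 1
          field_simp
      _ ≤ k ^ 2 * (L * n / k * √V) := by gcongr
      _ = L * n * (k * √V) := by field_simp
  have hquad : (k * √V) ^ 2 ≤ L * n * (k * √V) + (√k * n) ^ 2 := by
    rw [mul_pow, mul_pow, sq_sqrt hV, sq_sqrt hk.le]
    linarith [le_of_abs_le hscaled]
  have hsd : k * √V ≤ (L + √k) * n := by
    have := sqrt_nonneg k
    by_contra! hlt
    nlinarith [mul_nonneg hL hn, mul_nonneg (sqrt_nonneg k) hn]
  calc |k ^ 2 * V - k * n ^ 2| ≤ L * n * ((L + √k) * n) := hscaled.trans (by gcongr)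
    _ = L * (L + √k) * n ^ 2 := by ring

lemma log_sqrt_sq_add_sq_div_le (a : ℝ) {b : ℝ} (hb : 0 < b) :
    log (√(a ^ 2 + b ^ 2) / b) ≤ (a / b) ^ 2 := by
  have hsq : (√(a ^ 2 + b ^ 2) / b) ^ 2 = (a / b) ^ 2 + 1 := by
    rw [div_pow, sq_sqrt (by positivity)]
    field_simp
  have hlog := log_le_sub_one_of_pos (show 0 < (√(a ^ 2 + b ^ 2) / b) ^ 2 by positivity)
  rw [log_pow, hsq, Nat.cast_ofNat] at hlog
  linarith [sq_nonneg (a / b)]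

lemma div_le_log_sqrt_sq_add_sq_div_rpow {a b : ℝ} (ha : 0 < a) (hb : 0 < b) :
    b / a ≤ log (√(a ^ 2 + b ^ 2) / b) ^ (-(1 : ℝ) / 2) := by
  have hlog : 0 < log (√(a ^ 2 + b ^ 2) / b) :=
    log_pos ((one_lt_div hb).2 (lt_sqrt_of_sq_lt (lt_add_of_pos_left _ (by positivity))))
  calc b / a = ((a / b) ^ 2) ^ (-(1 : ℝ) / 2) := by
        rw [neg_div, rpow_neg (by positivity), ← sqrt_eq_rpow, sqrt_sq (by positivity), inv_div]
    _ ≤ _ := rpow_le_rpow_of_nonpos hlog (log_sqrt_sq_add_sq_div_le a hb) (by norm_num)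

lemma sq_div_mul_add_sqrt_le {a b L : ℝ} (ha : 0 < a) (hb : 0 < b) (hL : 0 ≤ L) :
    (b / (a ^ 2 + b ^ 2)) ^ 2 * (L * (L + √(1 + b ^ 2 / a ^ 2)))
      ≤ 5 * L * b * (a ^ 2 + b ^ 2) ^ (-(3 : ℝ) / 2)
        * (L + log (√(a ^ 2 + b ^ 2) / b) ^ (-(1 : ℝ) / 2)) := by
  set σ := √(a ^ 2 + b ^ 2) with hσ
  have hσpos : 0 < σ := by positivity
  have hσsq : a ^ 2 + b ^ 2 = σ ^ 2 := (sq_sqrt (by positivity)).symm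
  have hratio : √(1 + b ^ 2 / a ^ 2) = σ / a := by
    rw [hσ, ← sqrt_sq ha.le, ← sqrt_div (by positivity), sqrt_sq ha.le]
    congr 1
    field_simp
  have hrpow : (a ^ 2 + b ^ 2) ^ (-(3 : ℝ) / 2) = (σ ^ 3)⁻¹ := by
    rw [hσsq, ← rpow_natCast σ 2, ← rpow_mul hσpos.le, ← rpow_natCast σ 3, ← rpow_neg hσpos.le]
    norm_num
  have hbσ : b / σ ≤ 1 :=
    (div_le_one hσpos).2 (le_sqrt_of_sq_le (le_add_of_nonneg_left (by positivity)))
  have hlog := div_le_log_sqrt_sq_add_sq_div_rpow ha hb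
  rw [hratio, hrpow, hσsq]
  calc (b / σ ^ 2) ^ 2 * (L * (L + σ / a)) = L * b * (σ ^ 3)⁻¹ * (L * (b / σ) + b / a) := by
        field_simp
    _ ≤ L * b * (σ ^ 3)⁻¹ * (L * 1 + log (σ / b) ^ (-(1 : ℝ) / 2)) := by gcongr
    _ ≤ 5 * L * b * (σ ^ 3)⁻¹ * (L + log (σ / b) ^ (-(1 : ℝ) / 2)) := by
        have hnonneg := (div_pos hb ha).le.trans hlog
        rw [mul_one]
        gcongr
        linarith

lemma div_mul_sq_sub_mul_nonneg {a b a' b' : ℝ} (ha : 0 ≤ a) (hb : 0 ≤ b) (ha' : a' ≤ 0)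
    (hb' : 0 ≤ b') : 0 ≤ b' / b * a ^ 2 - a' * a :=
  sub_nonneg.2 ((mul_nonpos_of_nonpos_of_nonneg ha' ha).trans (by positivity))

variable {E : Type*} [NormedAddCommGroup E] [InnerProductSpace ℝ E] [FiniteDimensional ℝ E]
  [MeasurableSpace E] [BorelSpace E] {k : ℝ} {c : E} {L : ℝ≥0} {f : E → ℝ}

namespace IsLogLipschitz

theorem abs_sq_mul_variance_channelPosterior_sub_le (hf : IsLogLipschitz L f) (hk : 0 < k)
    [IsProbabilityMeasure (perturbedGaussian k c f)] (a b : ℝ) (x w : E) :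
    |(k + b ^ 2 / a ^ 2) ^ 2
        * Var[fun y => ⟪w, y⟫; channelPosterior (perturbedGaussian k c f) a b x]
      - (k + b ^ 2 / a ^ 2) * ‖w‖ ^ 2| ≤ L * (L + √(k + b ^ 2 / a ^ 2)) * ‖w‖ ^ 2 := by
  have hprob := isProbabilityMeasure_channelPosterior (ν := perturbedGaussian k c f)
    (a := a) (b := b) x
  obtain ⟨c', C, hC, hposterior⟩ :=
    hf.exists_channelPosterior_eq_perturbedGaussian hk (c := c) a b x
  rw [hposterior] at hprob ⊢
  have hk' : 0 < k + b ^ 2 / a ^ 2 := by positivity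
  exact abs_sq_mul_sub_mul_sq_le hk' L.2 (norm_nonneg w) (variance_nonneg _ _)
    ((hf.const_mul hC).abs_variance_inner_sub_le hk' w)

theorem abs_inner_fderiv_velocity_sub_le (hf : IsLogLipschitz L f) (hk : 0 < k)
    [IsProbabilityMeasure (perturbedGaussian k c f)] {a b : ℝ} (ha : a ≠ 0) (hb : b ≠ 0)
    (a' b' : ℝ) (x w : E) :
    |⟪w, fderiv ℝ (velocity (perturbedGaussian k c f) a b a' b') x w⟫
        - (k * (a' * a) + b' * b) / (k * a ^ 2 + b ^ 2) * ‖w‖ ^ 2|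
      ≤ |b' / b * a ^ 2 - a' * a| * ((b / (k * a ^ 2 + b ^ 2)) ^ 2
        * (L * (L + √(k + b ^ 2 / a ^ 2)))) * ‖w‖ ^ 2 := by
  have hvar := hf.abs_sq_mul_variance_channelPosterior_sub_le (c := c) hk a b x w
  rw [inner_fderiv_velocity ha hb]
  set V := Var[fun y => ⟪w, y⟫; channelPosterior (perturbedGaussian k c f) a b x]
  have hsplit : b' / b * ‖w‖ ^ 2
        + (b' / b * a ^ 2 - a' * a) * ((b / a ^ 2) ^ 2 * V - ‖w‖ ^ 2 / a ^ 2)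
        - (k * (a' * a) + b' * b) / (k * a ^ 2 + b ^ 2) * ‖w‖ ^ 2
      = (b' / b * a ^ 2 - a' * a) * (b / (k * a ^ 2 + b ^ 2)) ^ 2
        * ((k + b ^ 2 / a ^ 2) ^ 2 * V - (k + b ^ 2 / a ^ 2) * ‖w‖ ^ 2) := by
    field_simp
    ring
  rw [hsplit, abs_mul, abs_mul, abs_of_nonneg (sq_nonneg (b / _)), mul_assoc, mul_assoc,
    mul_assoc]
  gcongr

end IsLogLipschitz

theorem velocity_jacobian_bounds_log_lipschitz_general (hf : IsLogLipschitz L f)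
    [IsProbabilityMeasure (perturbedGaussian 1 c f)] {a b a' b' : ℝ} (ha : 0 < a) (hb : 0 < b)
    (ha' : a' ≤ 0) (hb' : 0 ≤ b') (x w : E) :
    |⟪w, fderiv ℝ (velocity (perturbedGaussian 1 c f) a b a' b') x w⟫
        - (a' * a + b' * b) / (a ^ 2 + b ^ 2) * ‖w‖ ^ 2|
      ≤ (b' / b * a ^ 2 - a' * a) * (5 * L * b * (a ^ 2 + b ^ 2) ^ (-(3 : ℝ) / 2)
        * (L + log (√(a ^ 2 + b ^ 2) / b) ^ (-(1 : ℝ) / 2))) * ‖w‖ ^ 2 := by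
  have hcoeff := div_mul_sq_sub_mul_nonneg ha.le hb.le ha' hb'
  have hbound := hf.abs_inner_fderiv_velocity_sub_le (c := c) one_pos ha.ne' hb.ne' a' b' x w
  rw [one_mul, one_mul, abs_of_nonneg hcoeff] at hbound
  refine hbound.trans ?_
  gcongr ?_ * ?_ * _
  exact sq_div_mul_add_sqrt_le ha hb L.2

end JacobianBounds

/-- **Two-sided Jacobian bound for log-Lipschitz perturbations of the Gaussian.**
If `f = dν/dγ_d` is `L`-log-Lipschitz, then for all `t ∈ (0,1)` and `x`,
`(c_t(−B_t − L² (b_t/(a_t²+b_t²))²) + (ȧ a + ḃ b)/(a²+b²)) I ⪯ ∇_x v(t,x)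
  ⪯ (c_t B_t + (ȧ a + ḃ b)/(a²+b²)) I`, where `c_t = (ḃ_t/b_t) a_t² − ȧ_t a_t` and
`B_t = 5 L b_t (a_t²+b_t²)^{-3/2} (L + (log(√(a_t²+b_t²)/b_t))^{-1/2})`
(as quadratic forms). -/
theorem velocity_jacobian_bounds_log_lipschitz
    (d : ℕ) (hd : 1 ≤ d)
    (L : ℝ) (hL : 0 ≤ L)
    -- the standard Gaussian measure γ_d
    (γ : Measure (EuclideanSpace ℝ (Fin d)))
    (hγ : γ = volume.withDensity (fun z =>
      ENNReal.ofReal ((2 * π) ^ (-(d:ℝ)/2) * exp (-‖z‖ ^ 2 / 2))))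
    -- the target measure ν with L-log-Lipschitz relative density f = dν/dγ_d
    (f : EuclideanSpace ℝ (Fin d) → ℝ) (hf_pos : ∀ x, 0 < f x)
    (hf_logLip : ∀ x y : EuclideanSpace ℝ (Fin d),
      |Real.log (f x) - Real.log (f y)| ≤ L * ‖x - y‖)
    (ν : Measure (EuclideanSpace ℝ (Fin d))) [IsProbabilityMeasure ν]
    (hν : ν = γ.withDensity (fun x => ENNReal.ofReal (f x)))
    (hmom : Integrable (fun y => ‖y‖ ^ 2) ν)
    -- interpolation coefficients
    (a b : ℝ → ℝ)
    (ha'_nonpos : ∀ t ∈ Icc (0:ℝ) 1, deriv a t ≤ 0)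
    (hb'_nonneg : ∀ t ∈ Icc (0:ℝ) 1, 0 ≤ deriv b t)
    (ha0 : 0 < a 0) (hb0 : 0 ≤ b 0) (ha1 : a 1 = 0) (hb1 : b 1 = 1)
    (ha_pos : ∀ t ∈ Ioo (0:ℝ) 1, 0 < a t)
    (hb_pos : ∀ t ∈ Ioo (0:ℝ) 1, 0 < b t)
    (ha_C2 : ContDiffOn ℝ 2 a (Ico 0 1))
    (hb_C2 : ContDiffOn ℝ 2 b (Ico 0 1))
    (ha2_C1 : ContDiffOn ℝ 1 (fun t => (a t) ^ 2) (Icc 0 1))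
    (hb_C1 : ContDiffOn ℝ 1 b (Icc 0 1))
    -- marginal density, score and velocity field
    (p : ℝ → EuclideanSpace ℝ (Fin d) → ℝ)
    (hp : ∀ t x, p t x =
      ∫ y, (2 * π * (a t) ^ 2) ^ (-(d:ℝ)/2) * exp (-‖x - b t • y‖ ^ 2 / (2 * (a t) ^ 2)) ∂ν)
    (s : ℝ → EuclideanSpace ℝ (Fin d) → EuclideanSpace ℝ (Fin d))
    (hs : ∀ t ∈ Ioo (0:ℝ) 1, ∀ x, s t x = gradient (fun z => Real.log (p t z)) x)
    (v : ℝ → EuclideanSpace ℝ (Fin d) → EuclideanSpace ℝ (Fin d))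
    (hv : ∀ t ∈ Ioo (0:ℝ) 1, ∀ x,
      v t x = (deriv b t / b t) • x
        + ((deriv b t / b t) * (a t) ^ 2 - deriv a t * a t) • s t x)
    -- the quantity B_t
    (B : ℝ → ℝ)
    (hB : ∀ t ∈ Ioo (0:ℝ) 1, B t =
      5 * L * b t * ((a t) ^ 2 + (b t) ^ 2) ^ (-(3:ℝ)/2)
        * (L + (Real.log (Real.sqrt ((a t) ^ 2 + (b t) ^ 2) / b t)) ^ (-(1:ℝ)/2))) :
    ∀ t ∈ Ioo (0:ℝ) 1, ∀ x, ∀ w : EuclideanSpace ℝ (Fin d),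
      (((deriv b t / b t) * (a t) ^ 2 - deriv a t * a t)
            * (-B t - L ^ 2 * (b t / ((a t) ^ 2 + (b t) ^ 2)) ^ 2)
          + (deriv a t * a t + deriv b t * b t) / ((a t) ^ 2 + (b t) ^ 2)) * ‖w‖ ^ 2
        ≤ ⟪w, fderiv ℝ (v t) x w⟫
      ∧ ⟪w, fderiv ℝ (v t) x w⟫
        ≤ (((deriv b t / b t) * (a t) ^ 2 - deriv a t * a t) * B t
            + (deriv a t * a t + deriv b t * b t) / ((a t) ^ 2 + (b t) ^ 2)) * ‖w‖ ^ 2 := by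

  intro t ht x w
  lift L to NNReal using hL
  have hf : IsLogLipschitz L f := ⟨hf_pos, .of_dist_le_mul fun x y => by
    simpa only [dist_eq_norm, norm_eq_abs] using hf_logLip x y⟩
  have hC : 0 < (2 * π) ^ (-(d : ℝ) / 2) := by positivity
  rw [hγ, hf.withDensity_gaussian_eq_perturbedGaussian hC.le] at hν
  have hvt : v t = velocity ν (a t) (b t) (deriv a t) (deriv b t) := by
    funext z
    simp only [velocity, marginalDensity, hv t ht, hs t ht, hp, finrank_euclideanSpace_fin]
  subst hν
  have ha' := ha'_nonpos t (Ioo_subset_Icc_self ht)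
  have hb' := hb'_nonneg t (Ioo_subset_Icc_self ht)
  have hbound := velocity_jacobian_bounds_log_lipschitz_general (c := 0) (hf.const_mul hC)
    (ha_pos t ht) (hb_pos t ht) ha' hb' x w
  rw [← hvt, ← hB t ht] at hbound
  obtain ⟨hlower, hupper⟩ := abs_le.1 hbound
  have hcoeff := div_mul_sq_sub_mul_nonneg (ha_pos t ht).le (hb_pos t ht).le ha' hb'
  have hslack : 0 ≤ (deriv b t / b t * a t ^ 2 - deriv a t * a t)
      * (L ^ 2 * (b t / (a t ^ 2 + b t ^ 2)) ^ 2) * ‖w‖ ^ 2 := by positivity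
  constructor <;> linarith
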